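/- arXiv:1704.05901 — 2 statements merged into one kernel-verified Lean document; each statement's English description precedes it below -/
import Mathlib

section
/- Let λ > 0 and ρ ≥ 3/2 be real numbers and m a natural number. Then for every real x ≥ 0 the normalization series of the photon-added Pöschl–Teller coherent states (first choice of Z_j) converges: the series ∑_{n=0}^{∞} [ Γ(n+m+1) Γ(n+2m+2ρ)² / ( Γ(n+1)² Γ(2n+2m+2ρ) Γ(n+m+2ρ) ) ] · (x/λ²)^{n} · λ^{2m} has infinite radius of convergence, so these coherent states are defined on the whole complex plane. -/
/-- The Gamma-function quotient in the normalization series. -/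
noncomputable def pacsCoeff (ρ : ℝ) (m n : ℕ) : ℝ :=
  Real.Gamma ((n : ℝ) + (m : ℝ) + 1)
            * Real.Gamma ((n : ℝ) + 2 * (m : ℝ) + 2 * ρ) ^ 2
          / (Real.Gamma ((n : ℝ) + 1) ^ 2
              * Real.Gamma (2 * (n : ℝ) + 2 * (m : ℝ) + 2 * ρ)
              * Real.Gamma ((n : ℝ) + (m : ℝ) + 2 * ρ))

theorem pacsCoeff_pos (ρ : ℝ) (hρ : 3 / 2 ≤ ρ) (m n : ℕ) : 0 < pacsCoeff ρ m n := by
  have hρ0 : 0 < ρ := by linarith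
  have h1 := Real.Gamma_pos_of_pos (show (0 : ℝ) < (n : ℝ) + (m : ℝ) + 1 by positivity)
  have h2 := Real.Gamma_pos_of_pos (show (0 : ℝ) < (n : ℝ) + 2 * (m : ℝ) + 2 * ρ by positivity)
  have h3 := Real.Gamma_pos_of_pos (show (0 : ℝ) < (n : ℝ) + 1 by positivity)
  have h4 := Real.Gamma_pos_of_pos
    (show (0 : ℝ) < 2 * (n : ℝ) + 2 * (m : ℝ) + 2 * ρ by positivity)
  have h5 := Real.Gamma_pos_of_pos (show (0 : ℝ) < (n : ℝ) + (m : ℝ) + 2 * ρ by positivity)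
  unfold pacsCoeff
  positivity

theorem pacsCoeff_succ_le (ρ : ℝ) (hρ : 3 / 2 ≤ ρ) (m n : ℕ) :
    pacsCoeff ρ m (n + 1) ≤ pacsCoeff ρ m n / ((n : ℝ) + 1) := by
  have hρ0 : 0 < ρ := by linarith
  have hn : (0 : ℝ) ≤ n := Nat.cast_nonneg n
  have hm : (0 : ℝ) ≤ m := Nat.cast_nonneg m
  have p1 : (0 : ℝ) < (n : ℝ) + (m : ℝ) + 1 := by positivity
  have p2 : (0 : ℝ) < (n : ℝ) + 2 * (m : ℝ) + 2 * ρ := by positivity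
  have p3 : (0 : ℝ) < (n : ℝ) + 1 := by positivity
  have p4 : (0 : ℝ) < 2 * (n : ℝ) + 2 * (m : ℝ) + 2 * ρ := by positivity
  have p5 : (0 : ℝ) < (n : ℝ) + (m : ℝ) + 2 * ρ := by positivity
  have e1 := Real.Gamma_add_one p1.ne'
  have e2 := Real.Gamma_add_one p2.ne'
  have e3 := Real.Gamma_add_one p3.ne'
  have e4 := Real.Gamma_add_one p4.ne'
  have e4' := Real.Gamma_add_one (add_pos p4 one_pos).ne'
  have e5 := Real.Gamma_add_one p5.ne'
  have hc := pacsCoeff_pos ρ hρ m n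
  have key : pacsCoeff ρ m (n + 1) = pacsCoeff ρ m n *
      ((((n : ℝ) + m + 1) * ((n : ℝ) + 2 * m + 2 * ρ) ^ 2) /
        (((n : ℝ) + 1) ^ 2 * ((2 * (n : ℝ) + 2 * m + 2 * ρ + 1) * (2 * (n : ℝ) + 2 * m + 2 * ρ))
          * ((n : ℝ) + m + 2 * ρ))) := by
    unfold pacsCoeff
    push_cast
    rw [show (n : ℝ) + 1 + m + 1 = (n : ℝ) + m + 1 + 1 by ring,
      show (n : ℝ) + 1 + 2 * m + 2 * ρ = (n : ℝ) + 2 * m + 2 * ρ + 1 by ring,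
      show 2 * ((n : ℝ) + 1) + 2 * m + 2 * ρ = 2 * (n : ℝ) + 2 * m + 2 * ρ + 1 + 1 by ring,
      show (n : ℝ) + 1 + m + 2 * ρ = (n : ℝ) + m + 2 * ρ + 1 by ring,
      e1, e2, e3, e4', e4, e5, div_mul_div_comm]
    congr 1 <;> ring
  rw [key, div_eq_mul_inv (pacsCoeff ρ m n)]
  refine mul_le_mul_of_nonneg_left ?_ hc.le
  rw [← one_div, div_le_div_iff₀ (by positivity) p3, one_mul]
  have a1 : (n : ℝ) + m + 1 ≤ (n : ℝ) + m + 2 * ρ := by linarith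
  have a2 : ((n : ℝ) + 2 * m + 2 * ρ) ^ 2 ≤
      (2 * (n : ℝ) + 2 * m + 2 * ρ + 1) * (2 * (n : ℝ) + 2 * m + 2 * ρ) := by
    rw [sq]
    exact mul_le_mul (by linarith) (by linarith) p2.le (by positivity)
  have a3 : (n : ℝ) + 1 ≤ ((n : ℝ) + 1) ^ 2 := by nlinarith
  calc _ ≤ ((n : ℝ) + m + 2 * ρ) * ((2 * (n : ℝ) + 2 * m + 2 * ρ + 1) *
        (2 * (n : ℝ) + 2 * m + 2 * ρ)) * ((n : ℝ) + 1) ^ 2 := by gcongr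
    _ = _ := by ring

/-- The normalization series of the photon-added Pöschl–Teller coherent
states (first choice of `Z_j`), `∑_n x^n/|K_n^m|²`, converges for every `x ≥ 0`
(infinite radius of convergence), so these states are defined on the whole complex plane. -/
theorem poschlTeller_PACS_normalization_series_summable
    (lam ρ : ℝ) (hlam : 0 < lam) (hρ : 3 / 2 ≤ ρ) (m : ℕ) :
    ∀ x : ℝ, 0 ≤ x →
      Summable (fun n : ℕ =>
        (Real.Gamma ((n : ℝ) + (m : ℝ) + 1)
            * Real.Gamma ((n : ℝ) + 2 * (m : ℝ) + 2 * ρ) ^ 2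
          / (Real.Gamma ((n : ℝ) + 1) ^ 2
              * Real.Gamma (2 * (n : ℝ) + 2 * (m : ℝ) + 2 * ρ)
              * Real.Gamma ((n : ℝ) + (m : ℝ) + 2 * ρ)))
          * (x / lam ^ 2) ^ n * lam ^ (2 * m)) := by
  intro x hx
  have hm : (0 : ℝ) ≤ m := Nat.cast_nonneg m
  have hbound : ∀ n : ℕ, pacsCoeff ρ m n ≤ pacsCoeff ρ m 0 / (n.factorial : ℝ) := by
    intro n
    induction n with
    | zero => simp
    | succ k ih =>
      have hk : (0 : ℝ) < (k : ℝ) + 1 := by positivity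
      refine (pacsCoeff_succ_le ρ hρ m k).trans ?_
      rw [Nat.factorial_succ]
      push_cast
      rw [mul_comm ((k : ℝ) + 1), ← div_div]
      gcongr
  have hy : 0 ≤ x / lam ^ 2 := by positivity
  have hs : Summable (fun n : ℕ => pacsCoeff ρ m n * (x / lam ^ 2) ^ n) := by
    refine Summable.of_nonneg_of_le (fun n => ?_) (fun n => ?_)
      ((Real.summable_pow_div_factorial (x / lam ^ 2)).mul_left (pacsCoeff ρ m 0))
    · exact mul_nonneg (pacsCoeff_pos ρ hρ m n).le (pow_nonneg hy n)
    · calc pacsCoeff ρ m n * (x / lam ^ 2) ^ n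
          ≤ (pacsCoeff ρ m 0 / (n.factorial : ℝ)) * (x / lam ^ 2) ^ n :=
            mul_le_mul_of_nonneg_right (hbound n) (pow_nonneg hy n)
        _ = _ := by ring
  exact hs.mul_right (lam ^ (2 * m))
end

section
/- Let κ > 0 and ν ≥ 1 be real numbers and m a natural number. The normalization series of the photon-added Pöschl–Teller coherent states (second choice of Z_j), namely ∑_{n=0}^{∞} [ κ^{2m} Γ(n+m+1) Γ(n+2m+ν+1)² / ( Γ(n+1)² Γ(n+m+ν+1) Γ(2m+ν+1) ) ] · x^{n}, converges for every real x with 0 ≤ x < 1 and diverges for every real x ≥ 1; hence these coherent states are defined exactly on the open unit disk |z| < 1. -/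
/-- The coefficients of the normalization series. -/
noncomputable def ptCoeff (κ ν : ℝ) (m n : ℕ) : ℝ :=
  κ ^ (2 * m) * Real.Gamma ((n : ℝ) + (m : ℝ) + 1)
            * Real.Gamma ((n : ℝ) + 2 * (m : ℝ) + ν + 1) ^ 2
          / (Real.Gamma ((n : ℝ) + 1) ^ 2
              * Real.Gamma ((n : ℝ) + (m : ℝ) + ν + 1)
              * Real.Gamma (2 * (m : ℝ) + ν + 1))

lemma ptCoeff_pos (κ ν : ℝ) (hκ : 0 < κ) (hν : 1 ≤ ν) (m n : ℕ) : 0 < ptCoeff κ ν m n := by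
  have h1 : 0 < Real.Gamma ((n : ℝ) + (m : ℝ) + 1) := Real.Gamma_pos_of_pos (by positivity)
  have h2 : 0 < Real.Gamma ((n : ℝ) + 2 * (m : ℝ) + ν + 1) :=
    Real.Gamma_pos_of_pos (by positivity)
  have h3 : 0 < Real.Gamma ((n : ℝ) + 1) := Real.Gamma_pos_of_pos (by positivity)
  have h4 : 0 < Real.Gamma ((n : ℝ) + (m : ℝ) + ν + 1) := Real.Gamma_pos_of_pos (by positivity)
  have h5 : 0 < Real.Gamma (2 * (m : ℝ) + ν + 1) := Real.Gamma_pos_of_pos (by positivity)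
  unfold ptCoeff
  positivity

lemma ptCoeff_succ (κ ν : ℝ) (hν : 1 ≤ ν) (m n : ℕ) :
    ptCoeff κ ν m (n + 1) = ptCoeff κ ν m n *
      ((((n : ℝ) + (m + 1)) / (n + 1)) * (((n : ℝ) + (2 * m + ν + 1)) / (n + 1)) *
        (((n : ℝ) + (2 * m + ν + 1)) / (n + (m + ν + 1)))) := by
  have h3 : 0 < Real.Gamma ((n : ℝ) + 1) := Real.Gamma_pos_of_pos (by positivity)
  have h4 : 0 < Real.Gamma ((n : ℝ) + (m : ℝ) + ν + 1) := Real.Gamma_pos_of_pos (by positivity)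
  have h5 : 0 < Real.Gamma (2 * (m : ℝ) + ν + 1) := Real.Gamma_pos_of_pos (by positivity)
  have p1 : 0 < (n : ℝ) + m + 1 := by positivity
  have p2 : 0 < (n : ℝ) + 2 * m + ν + 1 := by positivity
  have p3 : 0 < (n : ℝ) + 1 := by positivity
  have p4 : 0 < (n : ℝ) + m + ν + 1 := by positivity
  have g1 := Real.Gamma_add_one p1.ne'
  have g2 := Real.Gamma_add_one p2.ne'
  have g3 := Real.Gamma_add_one p3.ne'
  have g4 := Real.Gamma_add_one p4.ne'
  have e1 : ((n + 1 : ℕ) : ℝ) + m + 1 = (n : ℝ) + m + 1 + 1 := by push_cast; ring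
  have e2 : ((n + 1 : ℕ) : ℝ) + 2 * m + ν + 1 = (n : ℝ) + 2 * m + ν + 1 + 1 := by push_cast; ring
  have e3 : ((n + 1 : ℕ) : ℝ) + 1 = (n : ℝ) + 1 + 1 := by push_cast; ring
  have e4 : ((n + 1 : ℕ) : ℝ) + m + ν + 1 = (n : ℝ) + m + ν + 1 + 1 := by push_cast; ring
  have q1 : (n : ℝ) + (m + 1) = n + m + 1 := by ring
  have q2 : (n : ℝ) + (2 * m + ν + 1) = n + 2 * m + ν + 1 := by ring
  have q4 : (n : ℝ) + (m + ν + 1) = n + m + ν + 1 := by ring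
  unfold ptCoeff
  rw [e1, e2, e3, e4, g1, g2, g3, g4, q1, q2, q4]
  rw [div_mul_div_comm, div_mul_div_comm, div_mul_div_comm, div_eq_div_iff (by positivity)
    (by positivity)]
  ring

lemma pt_tendsto (a b : ℝ) :
    Filter.Tendsto (fun n : ℕ => ((n : ℝ) + a) / (n + b)) Filter.atTop (nhds 1) := by
  simpa [add_comm] using tendsto_add_mul_div_add_mul_atTop_nhds a b (1 : ℝ) (one_ne_zero (α := ℝ))

lemma ptCoeff_mono (κ ν : ℝ) (hκ : 0 < κ) (hν : 1 ≤ ν) (m : ℕ) : Monotone (ptCoeff κ ν m) := by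
  refine monotone_nat_of_le_succ fun n => ?_
  rw [ptCoeff_succ κ ν hν]
  refine le_mul_of_one_le_right (ptCoeff_pos κ ν hκ hν m n).le ?_
  have hm : (0 : ℝ) ≤ m := by positivity
  refine one_le_mul_of_one_le_of_one_le (one_le_mul_of_one_le_of_one_le ?_ ?_) ?_ <;>
  · rw [one_le_div (by positivity)]
    linarith

/-- The normalization series of the photon-added Pöschl–Teller coherent
states (second choice of `Z_j`) converges exactly for `0 ≤ x < 1`, so these states are
defined exactly on the open unit disk `|z| < 1`. -/
theorem poschlTeller_PACS_second_choice_normalization_radius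
    (κ ν : ℝ) (hκ : 0 < κ) (hν : 1 ≤ ν) (m : ℕ) :
    (∀ x : ℝ, 0 ≤ x → x < 1 →
      Summable (fun n : ℕ =>
        (κ ^ (2 * m) * Real.Gamma ((n : ℝ) + (m : ℝ) + 1)
            * Real.Gamma ((n : ℝ) + 2 * (m : ℝ) + ν + 1) ^ 2
          / (Real.Gamma ((n : ℝ) + 1) ^ 2
              * Real.Gamma ((n : ℝ) + (m : ℝ) + ν + 1)
              * Real.Gamma (2 * (m : ℝ) + ν + 1)))
          * x ^ n)) ∧
    (∀ x : ℝ, 1 ≤ x →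
      ¬ Summable (fun n : ℕ =>
        (κ ^ (2 * m) * Real.Gamma ((n : ℝ) + (m : ℝ) + 1)
            * Real.Gamma ((n : ℝ) + 2 * (m : ℝ) + ν + 1) ^ 2
          / (Real.Gamma ((n : ℝ) + 1) ^ 2
              * Real.Gamma ((n : ℝ) + (m : ℝ) + ν + 1)
              * Real.Gamma (2 * (m : ℝ) + ν + 1)))
          * x ^ n)) := by
  change (∀ x : ℝ, 0 ≤ x → x < 1 → Summable (fun n : ℕ => ptCoeff κ ν m n * x ^ n)) ∧
    (∀ x : ℝ, 1 ≤ x → ¬ Summable (fun n : ℕ => ptCoeff κ ν m n * x ^ n))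
  have hpos := ptCoeff_pos κ ν hκ hν m
  constructor
  · intro x hx0 hx1
    rcases hx0.eq_or_lt with rfl | hx
    · refine summable_of_ne_finset_zero (s := {0}) fun n hn => ?_
      have : n ≠ 0 := by simpa using hn
      simp [this]
    · refine summable_of_ratio_test_tendsto_lt_one hx1
        (Filter.Eventually.of_forall fun n => (mul_pos (hpos n) (pow_pos hx n)).ne') ?_
      have ht := (((pt_tendsto (m + 1) 1).mul (pt_tendsto (2 * m + ν + 1) 1)).mul
        (pt_tendsto (2 * m + ν + 1) (m + ν + 1))).mul_const x
      rw [one_mul, one_mul, one_mul] at ht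
      refine ht.congr fun n => ?_
      rw [Real.norm_of_nonneg (mul_pos (hpos _) (pow_pos hx _)).le,
        Real.norm_of_nonneg (mul_pos (hpos _) (pow_pos hx _)).le,
        eq_div_iff (mul_pos (hpos _) (pow_pos hx _)).ne', ptCoeff_succ κ ν hν]
      ring
  · intro x hx hs
    have h := hs.tendsto_atTop_zero
    have h2 : ptCoeff κ ν m 0 ≤ 0 := by
      refine ge_of_tendsto' h fun n => ?_
      exact (ptCoeff_mono κ ν hκ hν m (Nat.zero_le n)).trans
        (le_mul_of_one_le_right (hpos n).le (one_le_pow₀ hx))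
    exact absurd (hpos 0) h2.not_gt
end
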